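/- Let W : ℝ → ℝ be locally integrable and let c, θ ∈ ℝ. Suppose that for each E ∈ ℝ, (u(·,E), v(·,E)) is a solution of −u″ + (W − E)·u = 0 (i.e., of −u″ + W·u = E·u) with u(c,E) = sin θ and v(c,E) = cos θ, and that R : ℝ×ℝ → (0,∞) and φ : ℝ×ℝ → ℝ satisfy u(x,E) = R(x,E)·sin(φ(x,E)), v(x,E) = R(x,E)·cos(φ(x,E)) and φ(c,E) = θ for all x, E, with φ jointly continuous. Then for every fixed x ∈ ℝ, the function E ↦ φ(x,E) is differentiable on ℝ with derivative ∂φ/∂E(x,E) = R(x,E)^{−2}·∫_c^x u(t,E)² dt. -/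

import Mathlib

open MeasureTheory

/-!
For two energies `e` and `E` the Wronskian of the solutions satisfies
`u_e v_E - v_e u_E = (e - E) ∫_c^x u_e u_E`, while in Prüfer coordinates it equals
`R_e R_E sin (φ_e - φ_E)`. Dividing by `e - E` and letting `e → E` gives the formula, provided that
the solutions depend continuously on `e`, locally uniformly in `x`. That follows from a Grönwall
estimate for `(u_e - u_E)² + (v_e - v_E)²`. Since `W` is merely locally integrable, `v` is only
absolutely continuous and all these identities are integrated from almost everywhere derivatives.
-/

open Filter Set Topology
open scoped Interval NNReal

section AbsolutelyContinuous

theorem intervalIntegrable_of_locallyIntegrable {F : Type*} [NormedAddCommGroup F] {f : ℝ → F}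
    {μ : Measure ℝ} (hf : LocallyIntegrable f μ) (a b : ℝ) : IntervalIntegrable f μ a b :=
  (hf.integrableOn_isCompact isCompact_uIcc).intervalIntegrable

theorem absolutelyContinuousOnInterval_comp_of_lipschitzOnWith {X Y : Type*}
    [PseudoMetricSpace X] [PseudoMetricSpace Y] {f : ℝ → X} {g : X → Y} {K : ℝ≥0} {a b : ℝ}
    (hg : LipschitzOnWith K g (f '' [[a, b]])) (hf : AbsolutelyContinuousOnInterval f a b) :
    AbsolutelyContinuousOnInterval (fun x ↦ g (f x)) a b := by
  refine squeeze_zero' (.of_forall fun I ↦ Finset.sum_nonneg fun _ _ ↦ dist_nonneg) ?_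
    (by simpa using Tendsto.const_mul (K : ℝ) hf)
  filter_upwards [mem_inf_of_right (mem_principal_self _)] with I hI
  rw [Finset.mul_sum]
  refine Finset.sum_le_sum fun i hi ↦ ?_
  have hmem := hI.1 i hi
  exact hg.dist_le_mul _ (mem_image_of_mem f hmem.1) _ (mem_image_of_mem f hmem.2)

theorem absolutelyContinuousOnInterval_log {f : ℝ → ℝ} {a b : ℝ}
    (hf : AbsolutelyContinuousOnInterval f a b) (hne : ∀ x ∈ [[a, b]], f x ≠ 0) :
    AbsolutelyContinuousOnInterval (fun x ↦ Real.log (f x)) a b := by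
  have hcompact : IsCompact (f '' [[a, b]]) := isCompact_uIcc.image_of_continuousOn hf.continuousOn
  have hconvex : Convex ℝ (f '' [[a, b]]) :=
    (isPreconnected_uIcc.image f hf.continuousOn).ordConnected.convex
  have hlog : ContDiffOn ℝ 1 Real.log (f '' [[a, b]]) :=
    contDiffOn_id.log (forall_mem_image.2 hne)
  obtain ⟨K, hK⟩ := hlog.exists_lipschitzOnWith one_ne_zero hconvex hcompact
  exact absolutelyContinuousOnInterval_comp_of_lipschitzOnWith hK hf

theorem integral_eq_sub_of_ae_hasDerivAt {f f' : ℝ → ℝ} {a b : ℝ}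
    (hf : AbsolutelyContinuousOnInterval f a b)
    (hderiv : ∀ᵐ x, x ∈ Ι a b → HasDerivAt f (f' x) x) : ∫ x in a..b, f' x = f b - f a := by
  rw [← hf.integral_deriv_eq_sub]
  refine intervalIntegral.integral_congr_ae ?_
  filter_upwards [hderiv] with x hx hxmem
  exact (hx hxmem).deriv.symm

/- Bounding the logarithmic derivative makes Grönwall's inequality symmetric in the endpoints, so
that `b < a` needs no separate treatment. -/
theorem le_mul_exp_abs_integral_of_ae_abs_deriv_le {f f' k : ℝ → ℝ} {a b : ℝ}
    (hf : AbsolutelyContinuousOnInterval f a b) (hpos : ∀ x ∈ [[a, b]], 0 < f x)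
    (hderiv : ∀ᵐ x, x ∈ Ι a b → HasDerivAt f (f' x) x)
    (hk : IntervalIntegrable k volume a b) (hle : ∀ x ∈ Ι a b, |f' x| ≤ k x * f x) :
    f b ≤ f a * Real.exp |∫ x in a..b, k x| := by
  have hpos' : ∀ x ∈ Ι a b, 0 < f x := fun x hx ↦ hpos x (uIoc_subset_uIcc hx)
  have hlog : ∫ x in a..b, f' x / f x = Real.log (f b) - Real.log (f a) := by
    refine integral_eq_sub_of_ae_hasDerivAt
      (absolutelyContinuousOnInterval_log hf fun x hx ↦ (hpos x hx).ne') ?_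
    filter_upwards [hderiv] with x hx hxmem
    exact (hx hxmem).log (hpos' x hxmem).ne'
  have hbound : |∫ x in a..b, f' x / f x| ≤ |∫ x in a..b, k x| := by
    rw [← Real.norm_eq_abs]
    refine intervalIntegral.norm_integral_le_abs_of_norm_le
      ((ae_restrict_mem measurableSet_uIoc).mono fun x hx ↦ ?_) hk
    rw [Real.norm_eq_abs, abs_div, abs_of_pos (hpos' x hx)]
    exact (div_le_iff₀ (hpos' x hx)).2 (hle x hx)
  have ha := hpos a left_mem_uIcc
  have hb := hpos b right_mem_uIcc
  rw [← Real.log_le_log_iff hb (by positivity), Real.log_mul ha.ne' (Real.exp_ne_zero _),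
    Real.log_exp]
  linarith [le_abs_self (∫ x in a..b, f' x / f x)]

end AbsolutelyContinuous

theorem continuousAt_of_sq_sub_le {X : Type*} [TopologicalSpace X] {f g : X → ℝ} {a : X}
    (hle : ∀ᶠ e in 𝓝 a, (f e - f a) ^ 2 ≤ g e) (hg : Tendsto g (𝓝 a) (𝓝 0)) :
    ContinuousAt f a := by
  rw [ContinuousAt, tendsto_iff_norm_sub_tendsto_zero]
  have hsqrt : Tendsto (fun e ↦ √(g e)) (𝓝 a) (𝓝 0) := by simpa using hg.sqrt
  exact squeeze_zero' (.of_forall fun e ↦ norm_nonneg _)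
    (hle.mono fun e he ↦ Real.abs_le_sqrt he) hsqrt

theorem hasDerivAt_sub_mul {𝕜 : Type*} [NontriviallyNormedField 𝕜] {f : 𝕜 → 𝕜} {a : 𝕜}
    (hf : ContinuousAt f a) : HasDerivAt (fun x ↦ (x - a) * f x) (f a) a := by
  rw [hasDerivAt_iff_tendsto_slope]
  refine (hf.tendsto.mono_left nhdsWithin_le_nhds).congr' ?_
  filter_upwards [self_mem_nhdsWithin] with x hx
  rw [slope_def_field, sub_self, zero_mul, sub_zero, mul_div_cancel_left₀ _ (sub_ne_zero.2 hx)]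

theorem mul_sinc (x : ℝ) : x * Real.sinc x = Real.sin x := by
  rcases eq_or_ne x 0 with rfl | hx
  · simp
  · rw [Real.sinc_of_ne_zero hx, mul_div_cancel₀ _ hx]

/- With `D e = r e * r a * sinc (φ e - φ a)`, which tends to `r a ^ 2`, the cross product is
`(φ e - φ a) * D e`, so its slope is `D` times that of `φ`. -/
theorem hasDerivAt_polarAngle {u v r φ : ℝ → ℝ} {a w : ℝ} (hu : ContinuousAt u a)
    (hv : ContinuousAt v a) (hr : r a ≠ 0) (hur : ∀ e, u e = r e * Real.sin (φ e))
    (hvr : ∀ e, v e = r e * Real.cos (φ e)) (hφ : ContinuousAt φ a)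
    (hcross : HasDerivAt (fun e ↦ u e * v a - v e * u a) w a) :
    HasDerivAt φ ((r a ^ 2)⁻¹ * w) a := by
  have hr_eq (e : ℝ) : r e = u e * Real.sin (φ e) + v e * Real.cos (φ e) := by
    rw [hur, hvr]
    linear_combination -r e * Real.sin_sq_add_cos_sq (φ e)
  have hr_cont : ContinuousAt r a := by
    rw [funext hr_eq]
    fun_prop
  set D : ℝ → ℝ := fun e ↦ r e * r a * Real.sinc (φ e - φ a) with hD
  have hD_cont : ContinuousAt D a :=
    (hr_cont.mul continuousAt_const).mul
      (Real.continuous_sinc.continuousAt.comp (hφ.sub continuousAt_const))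
  have hDa : D a = r a ^ 2 := by simp [hD, sq]
  have hDa_ne : D a ≠ 0 := hDa ▸ pow_ne_zero 2 hr
  have hcross_eq (e : ℝ) : u e * v a - v e * u a = (φ e - φ a) * D e := by
    rw [hD, mul_left_comm, mul_sinc, Real.sin_sub, hur, hur, hvr, hvr]
    ring
  rw [hasDerivAt_iff_tendsto_slope] at hcross ⊢
  rw [← hDa, inv_mul_eq_div]
  refine (hcross.div (hD_cont.tendsto.mono_left nhdsWithin_le_nhds) hDa_ne).congr' ?_
  filter_upwards [nhdsWithin_le_nhds (hD_cont.eventually_ne hDa_ne)] with e he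
  simp only [Pi.div_apply, slope_def_field, hcross_eq, sub_self, zero_mul, sub_zero]
  field_simp

/- For solutions with values `yᵢ` and `z = v₁ - v₂` the left-hand side is the absolute value of the
derivative of `(u₁ - u₂)² + (v₁ - v₂)²`. -/
theorem abs_energy_deriv_le (q₁ q₂ y₁ y₂ z : ℝ) {ε : ℝ} (hε : 0 < ε) :
    |2 * (y₁ - y₂) * z + 2 * z * (q₁ * y₁ - q₂ * y₂)| ≤
      (|1 + q₂| + |q₁ - q₂| * (2 + y₂ ^ 2 / ε)) * ((y₁ - y₂) ^ 2 + z ^ 2 + ε) := by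
  obtain ⟨w, rfl⟩ : ∃ w, y₁ = w + y₂ := ⟨y₁ - y₂, by ring⟩
  rw [add_sub_cancel_right]
  have habs (a : ℝ) : |2 * a * z| ≤ a ^ 2 + z ^ 2 := by
    simpa [abs_mul] using two_mul_le_add_sq |a| |z|
  have hy : y₂ ^ 2 ≤ y₂ ^ 2 / ε * (w ^ 2 + z ^ 2 + ε) := by
    rw [mul_add, div_mul_cancel₀ _ hε.ne']
    exact le_add_of_nonneg_left (by positivity)
  have hfree : |2 * w * z| ≤ w ^ 2 + z ^ 2 + ε := (habs w).trans (by linarith)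
  have hforced : |2 * w * z| + |2 * y₂ * z| ≤ (2 + y₂ ^ 2 / ε) * (w ^ 2 + z ^ 2 + ε) := by
    linarith [habs y₂, sq_nonneg w]
  calc |2 * w * z + 2 * z * (q₁ * (w + y₂) - q₂ * y₂)|
      = |(1 + q₂) * (2 * w * z) + (q₁ - q₂) * (2 * w * z + 2 * y₂ * z)| := by ring_nf
    _ ≤ |1 + q₂| * |2 * w * z| + |q₁ - q₂| * (|2 * w * z| + |2 * y₂ * z|) := by
        refine (abs_add_le _ _).trans ?_
        rw [abs_mul, abs_mul (q₁ - q₂)]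
        gcongr
        exact abs_add_le _ _
    _ ≤ |1 + q₂| * (w ^ 2 + z ^ 2 + ε) +
          |q₁ - q₂| * ((2 + y₂ ^ 2 / ε) * (w ^ 2 + z ^ 2 + ε)) := by gcongr
    _ = (|1 + q₂| + |q₁ - q₂| * (2 + y₂ ^ 2 / ε)) * (w ^ 2 + z ^ 2 + ε) := by ring

/-- The pair `(u, v)` solves `-u'' + q u = 0`, where `v = u'` and the second derivative is
understood in integrated form, as is appropriate for a locally integrable potential `q`. -/
structure IsSchrodingerSolution (q u v : ℝ → ℝ) : Prop where
  locallyIntegrable : LocallyIntegrable q volume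
  hasDerivAt (x : ℝ) : HasDerivAt u (v x) x
  eq_add_integral (x y : ℝ) : v x = v y + ∫ t in y..x, q t * u t

/-- A bound, uniform in `0 < |e - E| ≤ 1`, for `((u_e - y)² + (v_e - y')²) / |e - E|` at `x`,
where `y` and `u_e` solve the equations with potentials `q` and `q - (e - E)` and have the same
initial data at `c`. -/
noncomputable def energyGrowth (q y : ℝ → ℝ) (c x : ℝ) : ℝ :=
  Real.exp |∫ t in c..x, (|1 + q t| + 2 + y t ^ 2)|

namespace IsSchrodingerSolution

section Solutions

variable {q q₁ q₂ u u₁ u₂ v v₁ v₂ : ℝ → ℝ}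

theorem continuous (h : IsSchrodingerSolution q u v) : Continuous u :=
  continuous_iff_continuousAt.2 fun x ↦ (h.hasDerivAt x).continuousAt

theorem locallyIntegrable_mul (h : IsSchrodingerSolution q u v) :
    LocallyIntegrable (fun t ↦ q t * u t) volume := by
  rw [← locallyIntegrableOn_univ]
  exact (locallyIntegrableOn_univ.2 h.locallyIntegrable).mul_continuousOn
    h.continuous.continuousOn isOpen_univ.isLocallyClosed

theorem deriv_eq_const_add_integral (h : IsSchrodingerSolution q u v) (c : ℝ) :
    v = fun x ↦ v c + ∫ t in c..x, q t * u t :=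
  funext fun x ↦ h.eq_add_integral x c

theorem continuous_deriv (h : IsSchrodingerSolution q u v) : Continuous v := by
  rw [h.deriv_eq_const_add_integral 0]
  exact continuous_const.add (intervalIntegral.continuous_primitive
    (intervalIntegrable_of_locallyIntegrable h.locallyIntegrable_mul) 0)

theorem absolutelyContinuousOnInterval (h : IsSchrodingerSolution q u v) (a b : ℝ) :
    AbsolutelyContinuousOnInterval u a b := by
  have hderiv : deriv u = v := funext fun x ↦ (h.hasDerivAt x).deriv
  have hcontDiff : ContDiff ℝ 1 u :=
    contDiff_one_iff_deriv.2 ⟨fun x ↦ (h.hasDerivAt x).differentiableAt,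
      hderiv ▸ h.continuous_deriv⟩
  exact hcontDiff.contDiffOn.absolutelyContinuousOnInterval

theorem absolutelyContinuousOnInterval_deriv (h : IsSchrodingerSolution q u v) (a b : ℝ) :
    AbsolutelyContinuousOnInterval v a b := by
  rw [h.deriv_eq_const_add_integral a]
  exact contDiff_const.contDiffOn.absolutelyContinuousOnInterval.fun_add
    ((intervalIntegrable_of_locallyIntegrable h.locallyIntegrable_mul a b
      ).absolutelyContinuousOnInterval_intervalIntegral left_mem_uIcc)

theorem ae_hasDerivAt_deriv (h : IsSchrodingerSolution q u v) :
    ∀ᵐ x, HasDerivAt v (q x * u x) x := by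
  filter_upwards [LocallyIntegrable.ae_hasDerivAt_integral h.locallyIntegrable_mul] with x hx
  rw [h.deriv_eq_const_add_integral 0]
  exact (hx 0).const_add _

theorem wronskian_sub_wronskian (h₁ : IsSchrodingerSolution q₁ u₁ v₁)
    (h₂ : IsSchrodingerSolution q₂ u₂ v₂) (c x : ℝ) :
    (u₁ x * v₂ x - v₁ x * u₂ x) - (u₁ c * v₂ c - v₁ c * u₂ c) =
      ∫ t in c..x, (q₂ t - q₁ t) * (u₁ t * u₂ t) := by
  have hac : AbsolutelyContinuousOnInterval (fun t ↦ u₁ t * v₂ t - v₁ t * u₂ t) c x :=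
    ((h₁.absolutelyContinuousOnInterval c x).fun_mul
      (h₂.absolutelyContinuousOnInterval_deriv c x)).fun_sub
    ((h₁.absolutelyContinuousOnInterval_deriv c x).fun_mul
      (h₂.absolutelyContinuousOnInterval c x))
  refine (integral_eq_sub_of_ae_hasDerivAt hac ?_).symm
  filter_upwards [h₁.ae_hasDerivAt_deriv, h₂.ae_hasDerivAt_deriv] with t hv₁ hv₂ _
  convert! ((h₁.hasDerivAt t).mul hv₂).sub (hv₁.mul (h₂.hasDerivAt t)) using 1
  ring

theorem ae_hasDerivAt_sq_sub_add_sq_sub (h₁ : IsSchrodingerSolution q₁ u₁ v₁)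
    (h₂ : IsSchrodingerSolution q₂ u₂ v₂) :
    ∀ᵐ x, HasDerivAt (fun t ↦ (u₁ t - u₂ t) ^ 2 + (v₁ t - v₂ t) ^ 2)
      (2 * (u₁ x - u₂ x) * (v₁ x - v₂ x) +
        2 * (v₁ x - v₂ x) * (q₁ x * u₁ x - q₂ x * u₂ x)) x := by
  filter_upwards [h₁.ae_hasDerivAt_deriv, h₂.ae_hasDerivAt_deriv] with x hv₁ hv₂
  convert! (((h₁.hasDerivAt x).sub (h₂.hasDerivAt x)).pow 2).add ((hv₁.sub hv₂).pow 2) using 1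
  simp

theorem absolutelyContinuousOnInterval_sq_sub_add_sq_sub (h₁ : IsSchrodingerSolution q₁ u₁ v₁)
    (h₂ : IsSchrodingerSolution q₂ u₂ v₂) (a b : ℝ) :
    AbsolutelyContinuousOnInterval (fun t ↦ (u₁ t - u₂ t) ^ 2 + (v₁ t - v₂ t) ^ 2) a b := by
  have hu := (h₁.absolutelyContinuousOnInterval a b).fun_sub
    (h₂.absolutelyContinuousOnInterval a b)
  have hv := (h₁.absolutelyContinuousOnInterval_deriv a b).fun_sub
    (h₂.absolutelyContinuousOnInterval_deriv a b)
  simpa only [sq] using (hu.fun_mul hu).fun_add (hv.fun_mul hv)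

/- The shift by `ε` keeps the quantity positive, as the logarithmic form of Grönwall's inequality
requires. -/
theorem sq_sub_add_sq_sub_add_le (h₁ : IsSchrodingerSolution q₁ u₁ v₁)
    (h₂ : IsSchrodingerSolution q₂ u₂ v₂) {ε : ℝ} (hε : 0 < ε) (c x : ℝ) :
    (u₁ x - u₂ x) ^ 2 + (v₁ x - v₂ x) ^ 2 + ε ≤
      ((u₁ c - u₂ c) ^ 2 + (v₁ c - v₂ c) ^ 2 + ε) *
        Real.exp |∫ t in c..x, (|1 + q₂ t| + |q₁ t - q₂ t| * (2 + u₂ t ^ 2 / ε))| := by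
  have hk : IntervalIntegrable (fun t ↦ |1 + q₂ t| + |q₁ t - q₂ t| * (2 + u₂ t ^ 2 / ε))
      volume c x := by
    have hq₁ := intervalIntegrable_of_locallyIntegrable h₁.locallyIntegrable c x
    have hq₂ := intervalIntegrable_of_locallyIntegrable h₂.locallyIntegrable c x
    have hu₂ := h₂.continuous
    exact (intervalIntegrable_const.add hq₂).abs.add
      ((hq₁.sub hq₂).abs.mul_continuousOn (by fun_prop))
  refine le_mul_exp_abs_integral_of_ae_abs_deriv_le
    ((h₁.absolutelyContinuousOnInterval_sq_sub_add_sq_sub h₂ c x).fun_add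
      contDiff_const.contDiffOn.absolutelyContinuousOnInterval)
    (fun t _ ↦ by positivity)
    ((h₁.ae_hasDerivAt_sq_sub_add_sq_sub h₂).mono fun t ht _ ↦ ht.add_const ε) hk
    fun t _ ↦ abs_energy_deriv_le _ _ _ _ _ hε

end Solutions

section Energy

variable {q y y' : ℝ → ℝ}

theorem intervalIntegrable_energyGrowth_integrand (h : IsSchrodingerSolution q y y') (a b : ℝ) :
    IntervalIntegrable (fun t ↦ |1 + q t| + 2 + y t ^ 2) volume a b :=
  ((intervalIntegrable_const.add
    (intervalIntegrable_of_locallyIntegrable h.locallyIntegrable a b)).abs.add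
      intervalIntegrable_const).add ((h.continuous.pow 2).intervalIntegrable a b)

theorem continuous_energyGrowth (h : IsSchrodingerSolution q y y') (c : ℝ) :
    Continuous (energyGrowth q y c) :=
  Real.continuous_exp.comp
    (intervalIntegral.continuous_primitive h.intervalIntegrable_energyGrowth_integrand c).abs

variable {W : ℝ → ℝ} {u v : ℝ → ℝ → ℝ} {c E : ℝ}

theorem sq_sub_add_sq_sub_le_abs_sub_mul
    (h : ∀ e, IsSchrodingerSolution (fun t ↦ W t - e) (fun t ↦ u t e) (fun t ↦ v t e))
    (hu : ∀ e, u c e = u c E) (hv : ∀ e, v c e = v c E) {e : ℝ} (he : |e - E| ≤ 1) (x : ℝ) :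
    (u x e - u x E) ^ 2 + (v x e - v x E) ^ 2 ≤
      |e - E| * energyGrowth (fun t ↦ W t - E) (fun t ↦ u t E) c x := by
  rcases eq_or_ne e E with rfl | hne
  · simp
  have hpos : 0 < |e - E| := abs_pos.2 (sub_ne_zero.2 hne)
  have hgronwall := (h e).sq_sub_add_sq_sub_add_le (h E) hpos c x
  rw [hu, hv, sub_self, sub_self, zero_pow two_ne_zero, add_zero, zero_add] at hgronwall
  have hexponent :
      |∫ t in c..x, (|1 + (W t - E)| + |W t - e - (W t - E)| * (2 + u t E ^ 2 / |e - E|))| ≤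
        |∫ t in c..x, (|1 + (W t - E)| + 2 + u t E ^ 2)| := by
    rw [← Real.norm_eq_abs]
    refine intervalIntegral.norm_integral_le_abs_of_norm_le (.of_forall fun t ↦ ?_)
      ((h E).intervalIntegrable_energyGrowth_integrand c x)
    rw [sub_sub_sub_cancel_left, abs_sub_comm E e, mul_add, mul_div_cancel₀ _ hpos.ne',
      Real.norm_of_nonneg (by positivity)]
    linarith
  calc (u x e - u x E) ^ 2 + (v x e - v x E) ^ 2
      ≤ (u x e - u x E) ^ 2 + (v x e - v x E) ^ 2 + |e - E| := le_add_of_nonneg_right hpos.le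
    _ ≤ |e - E| * energyGrowth (fun t ↦ W t - E) (fun t ↦ u t E) c x := by
        refine hgronwall.trans ?_
        unfold energyGrowth
        gcongr

theorem continuousAt_energy
    (h : ∀ e, IsSchrodingerSolution (fun t ↦ W t - e) (fun t ↦ u t e) (fun t ↦ v t e))
    (hu : ∀ e, u c e = u c E) (hv : ∀ e, v c e = v c E) (x : ℝ) :
    ContinuousAt (fun e ↦ u x e) E ∧ ContinuousAt (fun e ↦ v x e) E := by
  have hle : ∀ᶠ e in 𝓝 E, (u x e - u x E) ^ 2 + (v x e - v x E) ^ 2 ≤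
      |e - E| * energyGrowth (fun t ↦ W t - E) (fun t ↦ u t E) c x := by
    filter_upwards [Metric.closedBall_mem_nhds E one_pos] with e he
    exact sq_sub_add_sq_sub_le_abs_sub_mul h hu hv he x
  have hlim : Tendsto (fun e ↦ |e - E| * energyGrowth (fun t ↦ W t - E) (fun t ↦ u t E) c x)
      (𝓝 E) (𝓝 0) :=
    Continuous.tendsto' (by fun_prop) _ _ (by simp)
  exact ⟨continuousAt_of_sq_sub_le
      (hle.mono fun e he ↦ (le_add_of_nonneg_right (sq_nonneg _)).trans he) hlim,
    continuousAt_of_sq_sub_le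
      (hle.mono fun e he ↦ (le_add_of_nonneg_left (sq_nonneg _)).trans he) hlim⟩

theorem continuousAt_integral_mul_energy
    (h : ∀ e, IsSchrodingerSolution (fun t ↦ W t - e) (fun t ↦ u t e) (fun t ↦ v t e))
    (hu : ∀ e, u c e = u c E) (hv : ∀ e, v c e = v c E) (a b : ℝ) :
    ContinuousAt (fun e ↦ ∫ t in a..b, u t e * u t E) E := by
  have hu_cont := (h E).continuous
  have hgrowth_cont := (h E).continuous_energyGrowth c
  refine intervalIntegral.continuousAt_of_dominated_interval
    (bound := fun t ↦ 2 * u t E ^ 2 + energyGrowth (fun t ↦ W t - E) (fun t ↦ u t E) c t)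
    (.of_forall fun e ↦ ((h e).continuous.mul hu_cont).aestronglyMeasurable) ?_
    (Continuous.intervalIntegrable (by fun_prop) a b)
    (.of_forall fun t _ ↦ (continuousAt_energy h hu hv t).1.mul continuousAt_const)
  filter_upwards [Metric.closedBall_mem_nhds E one_pos] with e he
  refine .of_forall fun t _ ↦ ?_
  have hgrowth : (u t e - u t E) ^ 2 ≤
      energyGrowth (fun t ↦ W t - E) (fun t ↦ u t E) c t :=
    calc (u t e - u t E) ^ 2
        ≤ (u t e - u t E) ^ 2 + (v t e - v t E) ^ 2 := le_add_of_nonneg_right (sq_nonneg _)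
      _ ≤ |e - E| * energyGrowth (fun t ↦ W t - E) (fun t ↦ u t E) c t :=
          sq_sub_add_sq_sub_le_abs_sub_mul h hu hv he t
      _ ≤ energyGrowth (fun t ↦ W t - E) (fun t ↦ u t E) c t :=
          mul_le_of_le_one_left (Real.exp_pos _).le he
  rw [Real.norm_eq_abs, abs_le]
  constructor <;> nlinarith [sq_nonneg (u t e - 2 * u t E), sq_nonneg (u t e)]

theorem hasDerivAt_wronskian_energy
    (h : ∀ e, IsSchrodingerSolution (fun t ↦ W t - e) (fun t ↦ u t e) (fun t ↦ v t e))
    (hu : ∀ e, u c e = u c E) (hv : ∀ e, v c e = v c E) (x : ℝ) :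
    HasDerivAt (fun e ↦ u x e * v x E - v x e * u x E) (∫ t in c..x, u t E ^ 2) E := by
  have hwronskian (e : ℝ) : u x e * v x E - v x e * u x E =
      (e - E) * ∫ t in c..x, u t e * u t E := by
    have hgreen := (h e).wronskian_sub_wronskian (h E) c x
    simp only [hu e, hv e, sub_sub_sub_cancel_left, intervalIntegral.integral_const_mul] at hgreen
    linarith
  simp only [hwronskian, sq]
  exact hasDerivAt_sub_mul (continuousAt_integral_mul_energy h hu hv c x)

end Energy

end IsSchrodingerSolution

theorem prufer_phase_deriv_energy_general {W R φ : ℝ → ℝ} {u v : ℝ → ℝ → ℝ} {c x E : ℝ}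
    (h : ∀ e, IsSchrodingerSolution (fun t ↦ W t - e) (fun t ↦ u t e) (fun t ↦ v t e))
    (hu : ∀ e, u c e = u c E) (hv : ∀ e, v c e = v c E) (hR : R E ≠ 0)
    (huR : ∀ e, u x e = R e * Real.sin (φ e)) (hvR : ∀ e, v x e = R e * Real.cos (φ e))
    (hφ : ContinuousAt φ E) :
    HasDerivAt φ ((R E ^ 2)⁻¹ * ∫ t in c..x, u t E ^ 2) E :=
  have ⟨hu_cont, hv_cont⟩ := IsSchrodingerSolution.continuousAt_energy h hu hv x
  hasDerivAt_polarAngle hu_cont hv_cont hR huR hvR hφ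
    (IsSchrodingerSolution.hasDerivAt_wronskian_energy h hu hv x)

/-- Derivative of the Prüfer phase with respect to the energy `E`:
`∂φ/∂E(x,E) = R(x,E)⁻² ∫_c^x u(·,E)²`. -/
theorem prufer_phase_deriv_energy (W : ℝ → ℝ) (c θ : ℝ)
    (hW : LocallyIntegrable W volume)
    (u v R φ : ℝ → ℝ → ℝ)
    (hu : ∀ (E : ℝ) (x : ℝ), HasDerivAt (fun s => u s E) (v x E) x)
    (hv : ∀ (E : ℝ) (x y : ℝ),
      v x E = v y E + ∫ t in y..x, (W t - E) * u t E)
    (hu0 : ∀ E : ℝ, u c E = Real.sin θ)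
    (hv0 : ∀ E : ℝ, v c E = Real.cos θ)
    (hR : ∀ x E : ℝ, 0 < R x E)
    (huR : ∀ x E : ℝ, u x E = R x E * Real.sin (φ x E))
    (hvR : ∀ x E : ℝ, v x E = R x E * Real.cos (φ x E))
    (hφ0 : ∀ E : ℝ, φ c E = θ)
    (hφcont : Continuous fun p : ℝ × ℝ => φ p.1 p.2) :
    ∀ x E : ℝ,
      HasDerivAt (fun e => φ x e)
        ((R x E ^ 2)⁻¹ * ∫ t in c..x, u t E ^ 2) E := by
  intro x E
  exact prufer_phase_deriv_energy_general
    (fun e ↦ ⟨hW.sub continuous_const.locallyIntegrable, hu e, hv e⟩)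
    (fun e ↦ (hu0 e).trans (hu0 E).symm) (fun e ↦ (hv0 e).trans (hv0 E).symm)
    (hR x E).ne' (huR x) (hvR x) (hφcont.comp (.prodMk_right x)).continuousAt
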